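/- Let m, n be positive integers and E ⊂ ℝⁿ a finite set. Let (P^x)_{x∈E} be a family of polynomials of degree at most m−1 and let M > 0. Suppose that P^x ∈ Γ*(x, M) for each x ∈ E, and that |∂^β(P^x − P^{x'})(x)| ≤ M|x − x'|^{m−|β|} for all x, x' ∈ E and |β| ≤ m−1. Then there exist a constant C depending only on m, n and a function F ∈ C^m(ℝⁿ) such that ‖F‖_{C^m(ℝⁿ)} ≤ CM, F ≥ 0 everywhere on ℝⁿ, and J_x(F) = P^x for all x ∈ E. -/

import Mathlib

open scoped BigOperators

noncomputable section

abbrev Euc (n : ℕ) : Type := EuclideanSpace ℝ (Fin n)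
abbrev MPoly (n : ℕ) : Type := MvPolynomial (Fin n) ℝ

/-- Partial derivative in the `i`-th coordinate direction. -/
noncomputable def pD {n : ℕ} (i : Fin n) (F : Euc n → ℝ) : Euc n → ℝ :=
  fun x => fderiv ℝ F x (EuclideanSpace.single i (1 : ℝ))

/-- The multi-index partial derivative `∂^α F`. -/
noncomputable def mD {n : ℕ} (α : Fin n → ℕ) (F : Euc n → ℝ) : Euc n → ℝ :=
  (((List.finRange n).flatMap fun i => List.replicate (α i) i)).foldr pD F

/-- Partial derivative within a set. -/
noncomputable def pDW {n : ℕ} (s : Set (Euc n)) (i : Fin n) (F : Euc n → ℝ) : Euc n → ℝ :=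
  fun x => fderivWithin ℝ F s x (EuclideanSpace.single i (1 : ℝ))

/-- Multi-index partial derivative within a set. -/
noncomputable def mDW {n : ℕ} (s : Set (Euc n)) (α : Fin n → ℕ) (F : Euc n → ℝ) : Euc n → ℝ :=
  (((List.finRange n).flatMap fun i => List.replicate (α i) i)).foldr (pDW s) F

/-- The order `|α|` of a multi-index. -/
def deg {n : ℕ} (α : Fin n → ℕ) : ℕ := ∑ i, α i

/-- Evaluation of an `n`-variable polynomial at a point of `ℝⁿ`. -/
noncomputable def peval {n : ℕ} (P : MPoly n) (x : Euc n) : ℝ :=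
  MvPolynomial.eval (fun i => x i) P

/-- `F ∈ C^m(ℝⁿ)` with `‖F‖_{C^m(ℝⁿ)} ≤ M`. -/
def CmNormLe (m n : ℕ) (F : Euc n → ℝ) (M : ℝ) : Prop :=
  ContDiff ℝ (m : ℕ∞) F ∧ ∀ α : Fin n → ℕ, deg α ≤ m → ∀ x : Euc n, |mD α F x| ≤ M

/-- `F ∈ C^{m-1,1}(ℝⁿ)` with `‖F‖_{C^{m-1,1}(ℝⁿ)} ≤ M`. -/
def CmLipNormLe (m n : ℕ) (F : Euc n → ℝ) (M : ℝ) : Prop :=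
  ContDiff ℝ ((m - 1 : ℕ) : ℕ∞) F ∧
  (∀ α : Fin n → ℕ, deg α ≤ m - 1 → ∀ x : Euc n, |mD α F x| ≤ M) ∧
  (∀ α : Fin n → ℕ, deg α = m - 1 → ∀ i : Fin n, ∀ x : Euc n, ∀ t : ℝ,
    |mD α F (x + t • EuclideanSpace.single i (1 : ℝ)) - mD α F x| ≤ M * |t|)

/-- `J_x(F) = P`, i.e. `P` is the `(m-1)`-st order Taylor polynomial of `F` at `x`. -/
def IsJetAt (m n : ℕ) (F : Euc n → ℝ) (x : Euc n) (P : MPoly n) : Prop :=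
  P.totalDegree ≤ m - 1 ∧
  ∀ α : Fin n → ℕ, deg α ≤ m - 1 → mD α (peval P) x = mD α F x

/-- `J_x^+(F) = P`, i.e. `P` is the `m`-th order Taylor polynomial of `F` at `x`. -/
def IsJetPlusAt (m n : ℕ) (F : Euc n → ℝ) (x : Euc n) (P : MPoly n) : Prop :=
  P.totalDegree ≤ m ∧
  ∀ α : Fin n → ℕ, deg α ≤ m → mD α (peval P) x = mD α F x

/-- Truncation of a polynomial: keep the monomials of total degree `≤ d`. -/
noncomputable def truncLE {n : ℕ} (d : ℕ) (P : MPoly n) : MPoly n :=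
  ∑ s ∈ P.support.filter (fun s => (s.sum fun _ e => e) ≤ d),
    MvPolynomial.monomial s (P.coeff s)

/-- Substitution `y ↦ y + v` in a polynomial. -/
noncomputable def polyShift {n : ℕ} (v : Fin n → ℝ) (P : MPoly n) : MPoly n :=
  MvPolynomial.aeval (fun i => (MvPolynomial.X i + MvPolynomial.C (v i) : MPoly n)) P

/-- The `(m-1)`-st order Taylor polynomial of a polynomial `P` at `x`. -/
noncomputable def jetTrunc (m n : ℕ) (x : Euc n) (P : MPoly n) : MPoly n :=
  polyShift (fun i => -(x i)) (truncLE (m - 1) (polyShift (fun i => x i) P))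

/-- Multiplication of `(m-1)`-jets at `x`: `P ⊙_x Q = J_x(PQ)`. -/
noncomputable def jmul (m n : ℕ) (x : Euc n) (P Q : MPoly n) : MPoly n :=
  jetTrunc m n x (P * Q)

/-- `Γ*(x,M)`. -/
def GammaStar (m n : ℕ) (x : Euc n) (M : ℝ) : Set (MPoly n) :=
  {P | ∃ F : Euc n → ℝ, CmNormLe m n F M ∧ (∀ y, 0 ≤ F y) ∧ IsJetAt m n F x P}

/-- `Γ_f(x,M)`. -/
def GammaF (m n : ℕ) (f : Euc n → ℝ) (x : Euc n) (M : ℝ) : Set (MPoly n) :=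
  {P ∈ GammaStar m n x M | peval P x = f x}

/-- `Γ'*(x,M)` (the `C^{m-1,1}` version). -/
def GammaStar' (m n : ℕ) (x : Euc n) (M : ℝ) : Set (MPoly n) :=
  {P | ∃ F : Euc n → ℝ, CmLipNormLe m n F M ∧ (∀ y, 0 ≤ F y) ∧ IsJetAt m n F x P}

/-- `Γ'_f(x,M)`. -/
def GammaF' (m n : ℕ) (f : Euc n → ℝ) (x : Euc n) (M : ℝ) : Set (MPoly n) :=
  {P ∈ GammaStar' m n x M | peval P x = f x}

/-- `Γ₀⁺`. -/
def Gamma0plus (m n : ℕ) : Set (MPoly n) :=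
  {P | P.totalDegree ≤ m ∧
    (∀ β : Fin n → ℕ, deg β ≤ m → |mD β (peval P) 0| ≤ 1) ∧
    (∀ x : Euc n, 0 ≤ peval P x + ‖x‖ ^ m) ∧
    (∀ ε : ℝ, 0 < ε → ∃ δ : ℝ, 0 < δ ∧ ∀ x : Euc n, ‖x‖ ≤ δ → 0 ≤ peval P x + ε * ‖x‖ ^ m)}

/-- `Γ̃₀'`. -/
def GammaTilde0' (m n : ℕ) : Set (MPoly n) :=
  {P | P.totalDegree ≤ m - 1 ∧
    (∀ β : Fin n → ℕ, deg β ≤ m - 1 → |mD β (peval P) 0| ≤ 1) ∧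
    ∀ x : Euc n, 0 ≤ peval P x + ‖x‖ ^ m}

/-- The closed axis-parallel cube with center `c` and sidelength `δ`. -/
def cube {n : ℕ} (c : Euc n) (δ : ℝ) : Set (Euc n) :=
  {y | ∀ i, |y i - c i| ≤ δ / 2}

/-- `F ∈ C^{m-1,1}(Q)` with `‖F‖_{C^{m-1,1}(Q)} ≤ M`, for the cube `Q` of center `c`,
sidelength `δ`. -/
def CmLipOnCubeLe (m n : ℕ) (c : Euc n) (δ : ℝ) (F : Euc n → ℝ) (M : ℝ) : Prop :=
  ContDiffOn ℝ ((m - 1 : ℕ) : ℕ∞) F (cube c δ) ∧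
  (∀ α : Fin n → ℕ, deg α ≤ m - 1 → ∀ x ∈ cube c δ, |mDW (cube c δ) α F x| ≤ M) ∧
  (∀ α : Fin n → ℕ, deg α = m - 1 → ∀ i : Fin n, ∀ x ∈ cube c δ, ∀ t : ℝ,
    x + t • EuclideanSpace.single i (1 : ℝ) ∈ cube c δ →
    |mDW (cube c δ) α F (x + t • EuclideanSpace.single i (1 : ℝ)) - mDW (cube c δ) α F x|
      ≤ M * |t|)

/-!
The hypothesis `P x ∈ Γ*(x, M)` supplies, for each `x ∈ E`, a nonnegative `f x` of `C^m` norm at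
most `M` with jet `P x` at `x`, and Taylor's theorem with the compatibility of the jets shows that
`f x - f x'` is `O(M r ^ m)`, in the `C^m` norm at scale `r`, within distance `r ≥ ‖x - x'‖` of `x`.

At the scale `δ = 4 ^ (-k)`, a lattice partition of unity patches together the functions `f x`, each
piece using the point `x ∈ E` nearest to its node. The result `G k` is nonnegative and differs from
`f x` by `O(M δ ^ m)` within distance `2 δ` of `x`. With cutoffs `η k` equal to `1` within distance
`4 ^ (-k)` of `E` and to `0` beyond twice this distance, set
`F = η 0 * G 0 + ∑ k, η (k + 1) * (G (k + 1) - G k)`.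

Where `η (k + 1)` is neither `0` nor `1`, all earlier cutoffs are `1` and all later ones are `0`, so
there `F = (1 - η (k + 1)) * G k + η (k + 1) * G (k + 1)` is a convex combination of nonnegative
functions. Comparing both with `f x` for the point `x` nearest to the argument bounds the
derivatives: the `m`-th powers of the scale absorb the derivatives of the cutoff. Near an isolated
point `x` of `E` all `G k` with `k` large are equal to `f x`, hence so is `F`.
-/

namespace WhitneyNonneg

open Set Filter Topology

/-! ### Partial derivatives and iterated Fréchet derivatives -/

/-- The list of coordinate directions, in increasing order and with multiplicities `α`, along which
`mD α` differentiates. -/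
def multiIndexList {n : ℕ} (α : Fin n → ℕ) : List (Fin n) :=
  (List.finRange n).flatMap fun i => List.replicate (α i) i

section PartialDerivatives

variable {n k : ℕ} {F G : Euc n → ℝ} {x : Euc n} {A : ℝ}

lemma length_multiIndexList (α : Fin n → ℕ) : (multiIndexList α).length = deg α := by
  simp [multiIndexList, List.length_flatMap, deg, List.sum_ofFn, ← List.ofFn_eq_map]

lemma mD_eq_foldr (α : Fin n → ℕ) (F : Euc n → ℝ) : mD α F = (multiIndexList α).foldr pD F := rfl

lemma exists_perm_multiIndexList (r : Fin k → Fin n) :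
    ∃ α : Fin n → ℕ, (List.ofFn r).Perm (multiIndexList α) := by
  refine ⟨fun i => (List.ofFn r).count i, List.perm_iff_count.2 fun a => ?_⟩
  have hcount : (List.count a ∘ fun i => List.replicate (List.count i (List.ofFn r)) i) =
      fun i => if i = a then List.count a (List.ofFn r) else 0 := by
    funext i
    obtain rfl | h := eq_or_ne i a
    · simp
    · simp [List.count_replicate, h]
  rw [multiIndexList, List.count_flatMap, hcount, ← List.ofFn_eq_map, List.sum_ofFn]
  simp

lemma contDiff_pD (i : Fin n) (hF : ContDiff ℝ (k + 1 : ℕ) F) : ContDiff ℝ k (pD i F) :=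
  (hF.fderiv_right (m := k) (by norm_cast)).clm_apply contDiff_const

lemma contDiff_foldr_pD (l : List (Fin n)) (hF : ContDiff ℝ (k + l.length : ℕ) F) :
    ContDiff ℝ k (l.foldr pD F) := by
  induction l generalizing k with
  | nil => simpa using hF
  | cons i l ih =>
    have hlen : k + (i :: l).length = k + 1 + l.length := by rw [List.length_cons]; ring
    exact contDiff_pD i (ih (hlen ▸ hF))

lemma pD_comm (i j : Fin n) (hF : ContDiff ℝ 2 F) : pD i (pD j F) = pD j (pD i F) := by
  funext x
  have hdiff : DifferentiableAt ℝ (fderiv ℝ F) x :=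
    (hF.fderiv_right (m := 1) (by norm_num)).differentiable (by norm_num) x
  have pD_pD (i j : Fin n) : pD i (pD j F) x =
      fderiv ℝ (fderiv ℝ F) x (EuclideanSpace.single i 1) (EuclideanSpace.single j 1) := by
    change fderiv ℝ (fun y => fderiv ℝ F y (EuclideanSpace.single j 1)) x _ = _
    rw [(hdiff.hasFDerivAt.clm_apply (hasFDerivAt_const _ x)).fderiv]
    simp
  rw [pD_pD, pD_pD]
  exact hF.contDiffAt.isSymmSndFDerivAt (by simp) _ _

lemma foldr_pD_perm {l l' : List (Fin n)} (h : l.Perm l') (hF : ContDiff ℝ l.length F) :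
    l.foldr pD F = l'.foldr pD F := by
  induction h with
  | nil => rfl
  | cons i _ ih => rw [List.foldr_cons, List.foldr_cons, ih (hF.of_le (by simp))]
  | swap i j l =>
    have hlen : (j :: i :: l).length = 2 + l.length := by simp only [List.length_cons]; ring
    exact pD_comm _ _ (contDiff_foldr_pD (k := 2) l (hlen ▸ hF))
  | trans h _ ih ih' => rw [ih hF, ih' (by rwa [← h.length_eq])]

lemma foldr_pD_apply (l : List (Fin n)) (hF : ContDiff ℝ l.length F) (x : Euc n) :
    l.foldr pD F x =
      iteratedFDeriv ℝ l.length F x fun i => EuclideanSpace.single (l.get i) 1 := by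
  induction l generalizing x with
  | nil => simp
  | cons i l ih =>
    have hdiff : DifferentiableAt ℝ (iteratedFDeriv ℝ l.length F) x :=
      hF.differentiable_iteratedFDeriv (mod_cast Nat.lt_succ_self l.length) x
    rw [List.foldr_cons, funext (ih (hF.of_le (by simp))), pD,
      (hdiff.hasFDerivAt.continuousMultilinear_apply_const _).fderiv]
    rfl

lemma mD_apply (α : Fin n → ℕ) (hF : ContDiff ℝ (deg α) F) (x : Euc n) :
    mD α F x = iteratedFDeriv ℝ (multiIndexList α).length F x fun i =>
      EuclideanSpace.single ((multiIndexList α).get i) 1 :=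
  foldr_pD_apply (multiIndexList α) (by rwa [length_multiIndexList]) x

lemma abs_mD_le_norm_iteratedFDeriv (α : Fin n → ℕ) (hF : ContDiff ℝ (deg α) F) (x : Euc n) :
    |mD α F x| ≤ ‖iteratedFDeriv ℝ (deg α) F x‖ := by
  rw [mD_apply α hF, ← Real.norm_eq_abs, ← length_multiIndexList α]
  simpa using (iteratedFDeriv ℝ _ F x).le_opNorm fun i =>
    EuclideanSpace.single ((multiIndexList α).get i) (1 : ℝ)

lemma mD_sub (α : Fin n → ℕ) (hF : ContDiff ℝ (deg α) F) (hG : ContDiff ℝ (deg α) G)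
    (x : Euc n) : mD α (F - G) x = mD α F x - mD α G x := by
  rw [mD_apply α hF, mD_apply α hG, mD_apply α (F := F - G) (hF.sub hG),
    iteratedFDeriv_sub_apply]
  · rfl
  all_goals rw [length_multiIndexList]
  exacts [hF.contDiffAt, hG.contDiffAt]

lemma mD_congr (α : Fin n → ℕ) (hF : ContDiff ℝ (deg α) F) (hG : ContDiff ℝ (deg α) G)
    (h : F =ᶠ[𝓝 x] G) : mD α F x = mD α G x := by
  rw [mD_apply α hF, mD_apply α hG, (h.iteratedFDeriv ℝ _).eq_of_nhds]

lemma iteratedFDeriv_get_single (l : List (Fin n)) (r : Fin k → Fin n) (h : l = List.ofFn r) :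
    (iteratedFDeriv ℝ l.length F x fun i => EuclideanSpace.single (l.get i) 1) =
      iteratedFDeriv ℝ k F x fun i => EuclideanSpace.single (r i) 1 := by
  obtain rfl : k = l.length := by rw [h, List.length_ofFn]
  obtain rfl : r = l.get := List.ofFn_injective (h.symm.trans (List.ofFn_get l).symm)
  rfl

lemma norm_multilinear_le_of_single {ι κ W : Type*} [Fintype ι] [Fintype κ] [DecidableEq κ]
    [NormedAddCommGroup W] [NormedSpace ℝ W]
    (f : ContinuousMultilinearMap ℝ (fun _ : ι => EuclideanSpace ℝ κ) W) (hA : 0 ≤ A)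
    (h : ∀ r : ι → κ, ‖f fun i => EuclideanSpace.single (r i) 1‖ ≤ A) :
    ‖f‖ ≤ (Fintype.card κ : ℝ) ^ Fintype.card ι * A := by
  classical
  refine ContinuousMultilinearMap.opNorm_le_bound (by positivity) fun v => ?_
  have hv : v = fun i => ∑ j, v i j • EuclideanSpace.single j (1 : ℝ) := by
    funext i
    ext a
    simp [Pi.single_apply]
  calc ‖f v‖ = ‖∑ r : ι → κ, (∏ i, v i (r i)) • f fun i => EuclideanSpace.single (r i) 1‖ := by
        conv_lhs => rw [hv, ContinuousMultilinearMap.map_sum]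
        simp only [ContinuousMultilinearMap.map_smul_univ]
    _ ≤ ∑ _ : ι → κ, (∏ i, ‖v i‖) * A := by
        refine norm_sum_le_of_le _ fun r _ => ?_
        rw [norm_smul, norm_prod]
        gcongr with i
        exacts [PiLp.norm_apply_le (v i) (r i), h r]
    _ = (Fintype.card κ : ℝ) ^ Fintype.card ι * A * ∏ i, ‖v i‖ := by
        simp
        ring

lemma norm_iteratedFDeriv_le_of_mD (hF : ContDiff ℝ k F) (hA : 0 ≤ A)
    (h : ∀ α : Fin n → ℕ, deg α = k → |mD α F x| ≤ A) :
    ‖iteratedFDeriv ℝ k F x‖ ≤ (n : ℝ) ^ k * A := by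
  have hsingle (r : Fin k → Fin n) :
      ‖iteratedFDeriv ℝ k F x fun i => EuclideanSpace.single (r i) 1‖ ≤ A := by
    obtain ⟨α, hα⟩ := exists_perm_multiIndexList r
    have hdeg : deg α = k := by rw [← length_multiIndexList, ← hα.length_eq, List.length_ofFn]
    have hF' : ContDiff ℝ (List.ofFn r).length F := by rwa [List.length_ofFn]
    rw [← iteratedFDeriv_get_single _ r rfl, ← foldr_pD_apply _ hF' x, foldr_pD_perm hα hF',
      ← mD_eq_foldr, Real.norm_eq_abs]
    exact h α hdeg
  simpa using norm_multilinear_le_of_single _ hA hsingle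

end PartialDerivatives

section Polynomials

variable {n : ℕ}

lemma contDiff_peval (P : MPoly n) {k : ℕ∞} : ContDiff ℝ k (peval P) :=
  contDiff_iff_contDiffAt.2 fun _ => (AnalyticAt.aeval_mvPolynomial (𝕜 := ℝ)
    (fun i => (EuclideanSpace.proj i : Euc n →L[ℝ] ℝ).analyticAt _) P).contDiffAt

lemma pD_peval (i : Fin n) (P : MPoly n) :
    pD i (peval P) = peval (MvPolynomial.pderiv i P) := by
  have hdiff (Q : MPoly n) (x : Euc n) : DifferentiableAt ℝ (peval Q) x :=
    (contDiff_peval Q (k := 1)).differentiable (by norm_num) x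
  funext x
  induction P using MvPolynomial.induction_on with
  | C a =>
    have hC : peval (MvPolynomial.C a : MPoly n) = fun _ => a := by funext y; simp [peval]
    simp [pD, hC, peval]
  | add P Q hP hQ =>
    have hadd (P Q : MPoly n) : peval (P + Q) = peval P + peval Q := by funext y; simp [peval]
    simp only [map_add, hadd, Pi.add_apply, ← hP, ← hQ]
    rw [pD, fderiv_add (hdiff P x) (hdiff Q x)]
    rfl
  | mul_X P j hP =>
    let π : Euc n →L[ℝ] ℝ := EuclideanSpace.proj j
    have hmul : peval (P * MvPolynomial.X j) = peval P * ⇑π := by funext y; simp [peval, π]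
    rw [pD] at hP
    rw [pD, hmul, fderiv_mul (hdiff P x) π.differentiableAt, π.fderiv]
    obtain rfl | hij := eq_or_ne i j
    · simp [π, hP, peval]
    · simp [π, hP, peval, MvPolynomial.pderiv_X_of_ne hij.symm, hij.symm]

lemma foldr_pD_peval (l : List (Fin n)) (P : MPoly n) :
    l.foldr pD (peval P) = peval (l.foldr (fun i Q => MvPolynomial.pderiv i Q) P) := by
  induction l with
  | nil => rfl
  | cons i l ih => rw [List.foldr_cons, List.foldr_cons, ih, pD_peval]

lemma foldr_pderiv_eq_zero (l : List (Fin n)) {P : MPoly n} (hP : P.totalDegree < l.length) :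
    l.foldr (fun i Q => MvPolynomial.pderiv i Q) P = 0 := by
  suffices h : ∀ s : Fin n →₀ ℕ, P.totalDegree < s.degree + l.length →
      (l.foldr (fun i Q => MvPolynomial.pderiv i Q) P).coeff s = 0 by
    ext s
    exact h s (by omega)
  clear hP
  induction l with
  | nil => exact fun s hs => MvPolynomial.coeff_eq_zero_of_totalDegree_lt hs
  | cons i l ih =>
    intro s hs
    rw [List.foldr_cons, MvPolynomial.coeff_pderiv, ih, zero_mul]
    rw [List.length_cons] at hs
    rw [map_add, Finsupp.degree_single]
    omega

lemma mD_peval_eq_zero (α : Fin n → ℕ) {P : MPoly n} (hP : P.totalDegree < deg α) (x : Euc n) :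
    mD α (peval P) x = 0 := by
  rw [mD_eq_foldr, foldr_pD_peval, foldr_pderiv_eq_zero _ (by rwa [length_multiIndexList])]
  simp [peval]

lemma peval_sub (P Q : MPoly n) : peval (P - Q) = peval P - peval Q := by
  funext x
  simp [peval]

end Polynomials

/-! ### Scaled derivative bounds -/

/-- The function `f` is `C^m` at `y`, and the norm of its `C^m` jet at `y`, with lengths measured in
units of `δ`, is at most `A`. -/
def ScaledBoundAt {V W : Type*} [NormedAddCommGroup V] [NormedSpace ℝ V] [NormedAddCommGroup W]
    [NormedSpace ℝ W] (m : ℕ) (δ A : ℝ) (f : V → W) (y : V) : Prop :=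
  ContDiffAt ℝ m f y ∧ ∀ j ≤ m, δ ^ j * ‖iteratedFDeriv ℝ j f y‖ ≤ A

namespace ScaledBoundAt

variable {V W R ι : Type*} [NormedAddCommGroup V] [NormedSpace ℝ V] [NormedAddCommGroup W]
  [NormedSpace ℝ W] [NormedRing R] [NormedAlgebra ℝ R] {m : ℕ} {δ δ' A B : ℝ} {f g : V → W}
  {y : V}

lemma norm_le (hf : ScaledBoundAt m δ A f y) : ‖f y‖ ≤ A := by
  simpa using hf.2 0 m.zero_le

lemma nonneg (hf : ScaledBoundAt m δ A f y) : 0 ≤ A := (norm_nonneg _).trans hf.norm_le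

lemma contDiffAt_of_le (hf : ScaledBoundAt m δ A f y) {j : ℕ} (hj : j ≤ m) :
    ContDiffAt ℝ j f y :=
  hf.1.of_le (mod_cast hj)

lemma congr (hf : ScaledBoundAt m δ A f y) (h : g =ᶠ[𝓝 y] f) : ScaledBoundAt m δ A g y :=
  ⟨hf.1.congr_of_eventuallyEq h, fun j hj => by
    rw [(h.iteratedFDeriv ℝ j).eq_of_nhds]
    exact hf.2 j hj⟩

lemma mono (hf : ScaledBoundAt m δ A f y) (hAB : A ≤ B) : ScaledBoundAt m δ B f y :=
  ⟨hf.1, fun j hj => (hf.2 j hj).trans hAB⟩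

lemma of_scale_le (hf : ScaledBoundAt m δ A f y) (hδ' : 0 ≤ δ') (h : δ' ≤ δ) :
    ScaledBoundAt m δ' A f y :=
  ⟨hf.1, fun j hj => (by gcongr : δ' ^ j * ‖iteratedFDeriv ℝ j f y‖ ≤
    δ ^ j * ‖iteratedFDeriv ℝ j f y‖).trans (hf.2 j hj)⟩

lemma one_of_mul_pow (hf : ScaledBoundAt m δ (A * δ ^ m) f y) (hδ : 0 < δ) (hδ₁ : δ ≤ 1) :
    ScaledBoundAt m 1 A f y := by
  have hA : 0 ≤ A := nonneg_of_mul_nonneg_left hf.nonneg (by positivity)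
  refine ⟨hf.1, fun j hj => ?_⟩
  rw [one_pow, one_mul]
  refine le_of_mul_le_mul_left ((hf.2 j hj).trans ?_) (pow_pos hδ j)
  rw [mul_comm]
  exact mul_le_mul_of_nonneg_right (pow_le_pow_of_le_one hδ.le hδ₁ hj) hA

lemma const {a : W} (ha : ‖a‖ ≤ A) : ScaledBoundAt m δ A (fun _ : V => a) y := by
  refine ⟨contDiffAt_const, fun j _ => ?_⟩
  obtain rfl | hj := eq_or_ne j 0
  · simpa using ha
  · simpa [iteratedFDeriv_const_of_ne hj] using (norm_nonneg a).trans ha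

lemma add (hδ : 0 ≤ δ) (hf : ScaledBoundAt m δ A f y) (hg : ScaledBoundAt m δ B g y) :
    ScaledBoundAt m δ (A + B) (f + g) y := by
  refine ⟨hf.1.add hg.1, fun j hj => ?_⟩
  rw [iteratedFDeriv_add_apply (hf.contDiffAt_of_le hj) (hg.contDiffAt_of_le hj)]
  calc _ ≤ δ ^ j * (‖iteratedFDeriv ℝ j f y‖ + ‖iteratedFDeriv ℝ j g y‖) := by
        gcongr
        exact norm_add_le _ _
    _ ≤ A + B := by
        rw [mul_add]
        exact add_le_add (hf.2 j hj) (hg.2 j hj)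

lemma neg (hf : ScaledBoundAt m δ A f y) : ScaledBoundAt m δ A (-f) y :=
  ⟨hf.1.neg, fun j hj => by simpa [iteratedFDeriv_neg_apply] using hf.2 j hj⟩

lemma sub (hδ : 0 ≤ δ) (hf : ScaledBoundAt m δ A f y) (hg : ScaledBoundAt m δ B g y) :
    ScaledBoundAt m δ (A + B) (f - g) y :=
  sub_eq_add_neg f g ▸ hf.add hδ hg.neg

lemma sum (hδ : 0 ≤ δ) {f : ι → V → W} {s : Finset ι}
    (hf : ∀ i ∈ s, ScaledBoundAt m δ A (f i) y) :
    ScaledBoundAt m δ (s.card * A) (∑ i ∈ s, f i) y := by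
  classical
  induction s using Finset.induction_on with
  | empty =>
    rw [Finset.sum_empty]
    exact const (a := 0) (by simp)
  | insert i s hi ih =>
    rw [Finset.forall_mem_insert] at hf
    rw [Finset.sum_insert hi, Finset.card_insert_of_notMem hi]
    exact (hf.1.add hδ (ih hf.2)).mono (by push_cast; linarith)

lemma mul (hδ : 0 ≤ δ) {f g : V → R} (hf : ScaledBoundAt m δ A f y)
    (hg : ScaledBoundAt m δ B g y) : ScaledBoundAt m δ (2 ^ m * A * B) (f * g) y := by
  refine ⟨hf.1.mul hg.1, fun j hj => ?_⟩
  obtain ⟨s, hs, hfg⟩ := ((hf.1.eventually (by simp)).and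
    (hg.1.eventually (by simp))).exists_mem
  obtain ⟨u, hus, hu, hyu⟩ := mem_nhds_iff.1 hs
  have hleibniz := norm_iteratedFDerivWithin_mul_le
    (fun z hz => (hfg z (hus hz)).1.contDiffWithinAt)
    (fun z hz => (hfg z (hus hz)).2.contDiffWithinAt) hu.uniqueDiffOn hyu (Nat.cast_le.2 hj)
  simp only [iteratedFDerivWithin_of_isOpen _ hu hyu] at hleibniz
  calc δ ^ j * ‖iteratedFDeriv ℝ j (fun z => f z * g z) y‖
      ≤ δ ^ j * ∑ i ∈ Finset.range (j + 1),
          (j.choose i : ℝ) * ‖iteratedFDeriv ℝ i f y‖ * ‖iteratedFDeriv ℝ (j - i) g y‖ := by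
        gcongr
    _ = ∑ i ∈ Finset.range (j + 1), (j.choose i : ℝ) * ((δ ^ i * ‖iteratedFDeriv ℝ i f y‖) *
          (δ ^ (j - i) * ‖iteratedFDeriv ℝ (j - i) g y‖)) := by
        rw [Finset.mul_sum]
        refine Finset.sum_congr rfl fun i hi => ?_
        rw [← pow_mul_pow_sub δ (Finset.mem_range_succ_iff.1 hi)]
        ring
    _ ≤ ∑ i ∈ Finset.range (j + 1), (j.choose i : ℝ) * (A * B) := by
        gcongr with i hi
        · exact hf.nonneg
        · exact hf.2 i ((Finset.mem_range_succ_iff.1 hi).trans hj)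
        · exact hg.2 (j - i) ((Nat.sub_le j i).trans hj)
    _ = 2 ^ j * (A * B) := by
        rw [← Finset.sum_mul]
        exact_mod_cast congrArg (fun k : ℕ => (k : ℝ) * (A * B)) (Nat.sum_range_choose j)
    _ ≤ 2 ^ m * A * B := by
        rw [mul_assoc]
        have := mul_nonneg hf.nonneg hg.nonneg
        gcongr
        norm_num

lemma comp_smul_sub (hf : ContDiff ℝ m f) {c : ℝ} {a : V}
    (h : ScaledBoundAt m (|c| * δ) A f (c • y - a)) :
    ScaledBoundAt m δ A (fun z => f (c • z - a)) y := by
  have hsub : ContDiff ℝ m fun z => f (z - a) := hf.comp (contDiff_id.sub contDiff_const)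
  refine ⟨(hsub.comp (contDiff_const_smul c)).contDiffAt, fun j hj => ?_⟩
  rw [congrFun (iteratedFDeriv_comp_const_smul c (hsub.of_le (mod_cast hj))) y,
    iteratedFDeriv_comp_sub, norm_smul, norm_pow, Real.norm_eq_abs]
  refine le_trans (le_of_eq ?_) (h.2 j hj)
  ring

lemma exists_of_hasCompactSupport (hf : ContDiff ℝ m f) (hc : HasCompactSupport f)
    (hδ : 0 ≤ δ) : ∃ A, ∀ y, ScaledBoundAt m δ A f y := by
  have hbound (j : ℕ) (hj : j ≤ m) : ∃ B, ∀ y, ‖iteratedFDeriv ℝ j f y‖ ≤ B :=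
    (hc.iteratedFDeriv j).exists_bound_of_continuous
      (hf.continuous_iteratedFDeriv (mod_cast hj))
  choose! B hB using hbound
  obtain ⟨A, hA⟩ := ((Finset.range (m + 1)).image fun j => δ ^ j * B j).exists_le
  refine ⟨A, fun y => ⟨hf.contDiffAt, fun j hj => ?_⟩⟩
  exact (mul_le_mul_of_nonneg_left (hB j hj y) (pow_nonneg hδ j)).trans
    (hA _ (Finset.mem_image_of_mem _ (Finset.mem_range_succ_iff.2 hj)))

end ScaledBoundAt

/-! ### Taylor estimates -/

section Taylor

variable {V W : Type*} [NormedAddCommGroup V] [NormedSpace ℝ V] [NormedAddCommGroup W]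
  [NormedSpace ℝ W] {m : ℕ} {r A : ℝ} {H : V → W} {x y : V}

lemma mul_norm_iteratedFDeriv_sub_le_of_closedBall {j : ℕ} (hH : ContDiff ℝ (j + 1 : ℕ) H)
    (hr : 0 < r) (hA : ∀ z ∈ Metric.closedBall x r,
      r ^ (j + 1) * ‖iteratedFDeriv ℝ (j + 1) H z‖ ≤ A) (hy : y ∈ Metric.closedBall x r) :
    r ^ j * ‖iteratedFDeriv ℝ j H y - iteratedFDeriv ℝ j H x‖ ≤ A := by
  have hmean : ‖iteratedFDeriv ℝ j H y - iteratedFDeriv ℝ j H x‖ ≤ A / r ^ (j + 1) * ‖y - x‖ := by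
    refine (convex_closedBall x r).norm_image_sub_le_of_norm_fderiv_le (𝕜 := ℝ)
      (fun z _ => hH.differentiable_iteratedFDeriv (mod_cast j.lt_succ_self) z)
      (fun z hz => ?_) (Metric.mem_closedBall_self hr.le) hy
    rw [norm_fderiv_iteratedFDeriv, le_div_iff₀' (by positivity)]
    exact hA z hz
  have hA₀ : 0 ≤ A := le_trans (by positivity) (hA y hy)
  rw [mem_closedBall_iff_norm] at hy
  calc _ ≤ r ^ j * (A / r ^ (j + 1) * r) := by
        gcongr
        exact hmean.trans (by gcongr)
    _ = A := by
        field_simp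
        ring

lemma norm_iteratedFDeriv_le_of_closedBall (hH : ContDiff ℝ m H) (hr : 0 < r)
    (htop : ∀ z ∈ Metric.closedBall x r, ‖iteratedFDeriv ℝ m H z‖ ≤ A)
    (hx : ScaledBoundAt m r (A * r ^ m) H x) {k : ℕ} (hk : k ≤ m) :
    ∀ z ∈ Metric.closedBall x r,
      r ^ (m - k) * ‖iteratedFDeriv ℝ (m - k) H z‖ ≤ 2 ^ k * (A * r ^ m) := by
  induction k with
  | zero =>
    intro z hz
    rw [tsub_zero, pow_zero, one_mul, mul_comm A]
    exact mul_le_mul_of_nonneg_left (htop z hz) (by positivity)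
  | succ k ih =>
    intro z hz
    obtain ⟨j, hj⟩ : ∃ j, m - k = j + 1 := ⟨m - (k + 1), by omega⟩
    rw [show m - (k + 1) = j by omega]
    have hinc := mul_norm_iteratedFDeriv_sub_le_of_closedBall
      (hH.of_le (mod_cast (by omega : j + 1 ≤ m))) hr (hj ▸ ih (by omega)) hz
    have hA : 0 ≤ A * r ^ m := hx.nonneg
    calc r ^ j * ‖iteratedFDeriv ℝ j H z‖
        ≤ r ^ j * (‖iteratedFDeriv ℝ j H z - iteratedFDeriv ℝ j H x‖ +
            ‖iteratedFDeriv ℝ j H x‖) := by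
          gcongr
          exact norm_le_norm_sub_add _ _
      _ ≤ 2 ^ k * (A * r ^ m) + 1 * (A * r ^ m) := by
          rw [mul_add, one_mul]
          exact add_le_add hinc (hx.2 j (by omega))
      _ ≤ 2 ^ (k + 1) * (A * r ^ m) := by
          rw [← add_mul, pow_succ, mul_two]
          gcongr
          exact one_le_pow₀ (by norm_num)

lemma ScaledBoundAt.of_mem_closedBall (hx : ScaledBoundAt m r (A * r ^ m) H x)
    (hH : ContDiff ℝ m H) (hr : 0 < r)
    (htop : ∀ z ∈ Metric.closedBall x r, ‖iteratedFDeriv ℝ m H z‖ ≤ A)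
    (hy : y ∈ Metric.closedBall x r) : ScaledBoundAt m r (2 ^ m * A * r ^ m) H y := by
  refine ⟨hH.contDiffAt, fun j hj => ?_⟩
  have h := norm_iteratedFDeriv_le_of_closedBall hH hr htop hx (Nat.sub_le m j) y hy
  rw [Nat.sub_sub_self hj] at h
  have hA : 0 ≤ A * r ^ m := hx.nonneg
  refine h.trans ?_
  rw [mul_assoc]
  gcongr
  exacts [by norm_num, Nat.sub_le m j]

end Taylor

section Jets

variable {m n : ℕ} {r A M : ℝ} {F F' : Euc n → ℝ} {P P' : MPoly n} {x x' y : Euc n}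

lemma scaledBoundAt_of_mD (hF : ContDiff ℝ m F) (hr : 0 < r) (hA : 0 ≤ A)
    (h : ∀ α : Fin n → ℕ, deg α ≤ m → r ^ deg α * |mD α F x| ≤ A) :
    ScaledBoundAt m r ((n + 1) ^ m * A) F x := by
  refine ⟨hF.contDiffAt, fun j hj => ?_⟩
  have hbound : ‖iteratedFDeriv ℝ j F x‖ ≤ (n : ℝ) ^ j * (A / r ^ j) := by
    refine norm_iteratedFDeriv_le_of_mD (hF.of_le (mod_cast hj)) (by positivity) ?_
    rintro α rfl
    exact (le_div_iff₀' (by positivity)).2 (h α hj)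
  calc r ^ j * ‖iteratedFDeriv ℝ j F x‖ ≤ r ^ j * ((n : ℝ) ^ j * (A / r ^ j)) := by gcongr
    _ = (n : ℝ) ^ j * A := by field_simp
    _ ≤ ((n : ℝ) + 1) ^ j * A := by
        gcongr
        linarith
    _ ≤ ((n : ℝ) + 1) ^ m * A := by
        gcongr
        linarith [(Nat.cast_nonneg n : (0 : ℝ) ≤ n)]

lemma scaledBoundAt_of_cmNormLe (hF : CmNormLe m n F M) (hM : 0 ≤ M) (x : Euc n) :
    ScaledBoundAt m 1 ((n + 1) ^ m * M) F x :=
  scaledBoundAt_of_mD hF.1 one_pos hM fun α hα => by simpa using hF.2 α hα x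

lemma mD_sub_peval (α : Fin n → ℕ) (hF : ContDiff ℝ (deg α) F) (hP : P.totalDegree < deg α)
    (x : Euc n) : mD α (F - peval P) x = mD α F x := by
  rw [mD_sub α hF (contDiff_peval P), mD_peval_eq_zero α hP, sub_zero]

lemma norm_iteratedFDeriv_sub_peval_le (hF : CmNormLe m n F M) (hM : 0 ≤ M)
    (hP : P.totalDegree < m) (x : Euc n) :
    ‖iteratedFDeriv ℝ m (F - peval P) x‖ ≤ (n + 1) ^ m * M := by
  refine (norm_iteratedFDeriv_le_of_mD (F := F - peval P)
    (hF.1.sub (contDiff_peval P)) hM ?_).trans (by gcongr; linarith)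
  rintro α rfl
  rw [mD_sub_peval α hF.1 hP]
  exact hF.2 α le_rfl x

lemma scaledBoundAt_sub_peval (hm : 0 < m) (hF : CmNormLe m n F M) (hM : 0 ≤ M)
    (hP : IsJetAt m n F x P) (hr : 0 < r) :
    ScaledBoundAt m r ((n + 1) ^ m * M * r ^ m) (F - peval P) x := by
  rw [mul_assoc]
  refine scaledBoundAt_of_mD (hF.1.sub (contDiff_peval P)) hr (by positivity) fun α hα => ?_
  obtain rfl | hα' := hα.eq_or_lt
  · rw [mD_sub_peval α hF.1 (by have := hP.1; omega), mul_comm]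
    gcongr
    exact hF.2 α hα x
  · rw [mD_sub α (hF.1.of_le (mod_cast hα)) (contDiff_peval P), hP.2 α (by omega), sub_self,
      abs_zero, mul_zero]
    positivity

lemma scaledBoundAt_peval_sub_peval (hM : 0 ≤ M) (hP : P.totalDegree ≤ m - 1)
    (hP' : P'.totalDegree ≤ m - 1) (hPP' : ∀ β : Fin n → ℕ, deg β ≤ m - 1 →
      |mD β (peval (P - P')) x| ≤ M * ‖x - x'‖ ^ (m - deg β))
    (hr : 0 < r) (hx : ‖x - x'‖ ≤ r) :
    ScaledBoundAt m r ((n + 1) ^ m * M * r ^ m) (peval P - peval P') x := by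
  rw [mul_assoc, ← peval_sub]
  refine scaledBoundAt_of_mD (contDiff_peval _) hr (by positivity) fun α hα => ?_
  obtain hα' | hα' := le_or_gt (deg α) (m - 1)
  · calc r ^ deg α * |mD α (peval (P - P')) x| ≤ r ^ deg α * (M * r ^ (m - deg α)) := by
          gcongr
          exact (hPP' α hα').trans (by gcongr)
      _ = M * r ^ m := by
          rw [← pow_mul_pow_sub r hα]
          ring
  · have hdeg : (P - P').totalDegree < deg α :=
      ((MvPolynomial.totalDegree_sub P P').trans (max_le hP hP')).trans_lt hα'
    rw [mD_peval_eq_zero α hdeg, abs_zero, mul_zero]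
    positivity

/-- Constant in the comparison of the local extensions attached to two points. -/
def compareConst (m n : ℕ) : ℝ := 2 ^ m * ((2 + 2 ^ m) * (n + 1) ^ m)

lemma scaledBoundAt_sub_of_isJetAt (hm : 0 < m) (hM : 0 ≤ M) (hF : CmNormLe m n F M)
    (hF' : CmNormLe m n F' M) (hP : IsJetAt m n F x P) (hP' : IsJetAt m n F' x' P')
    (hPP' : ∀ β : Fin n → ℕ, deg β ≤ m - 1 →
      |mD β (peval (P - P')) x| ≤ M * ‖x - x'‖ ^ (m - deg β))
    (hr : 0 < r) (hx : ‖x - x'‖ ≤ r) (hy : ‖y - x‖ ≤ r) :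
    ScaledBoundAt m r (compareConst m n * M * r ^ m) (F - F') y := by
  set B : ℝ := (n + 1) ^ m * M
  have hB : 0 ≤ B := by positivity
  have hFP : ScaledBoundAt m r (B * r ^ m) (F - peval P) x :=
    scaledBoundAt_sub_peval hm hF hM hP hr
  have hpoly : ScaledBoundAt m r (B * r ^ m) (peval P - peval P') x :=
    scaledBoundAt_peval_sub_peval hM hP.1 hP'.1 hPP' hr hx
  have hFP' : ScaledBoundAt m r (2 ^ m * B * r ^ m) (F' - peval P') x :=
    (scaledBoundAt_sub_peval hm hF' hM hP' hr).of_mem_closedBall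
      (hF'.1.sub (contDiff_peval P')) hr
      (fun z _ => norm_iteratedFDeriv_sub_peval_le hF' hM (by have := hP'.1; omega) z)
      (mem_closedBall_iff_norm.2 hx)
  have hsub : ScaledBoundAt m r ((2 + 2 ^ m) * B * r ^ m) (F - F') x := by
    convert (hFP.add hr.le hpoly).sub hr.le hFP' using 1
    · ring
    · abel
  have htop (z : Euc n) : ‖iteratedFDeriv ℝ m (F - F') z‖ ≤ (2 + 2 ^ m) * B := by
    have h := ((scaledBoundAt_of_cmNormLe hF hM z).sub zero_le_one
      (scaledBoundAt_of_cmNormLe hF' hM z)).2 m le_rfl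
    rw [one_pow, one_mul] at h
    exact h.trans (by nlinarith [pow_pos (two_pos : (0 : ℝ) < 2) m])
  convert hsub.of_mem_closedBall (hF.1.sub hF'.1) hr (fun z _ => htop z)
    (mem_closedBall_iff_norm.2 hy) using 1
  rw [compareConst]
  ring

end Jets

/-! ### Partitions of unity at a given scale -/

/-- A `C^m` partition of unity `φ` at scale `δ` with nodes `c`: near each point all but at most `K`
of the functions vanish, the nodes of these lie within `δ / 4` of the point, and `B` bounds the
jets of the functions in units of `δ`. -/
structure IsUniformPartition {V κ : Type*} [NormedAddCommGroup V] [NormedSpace ℝ V] (m K : ℕ)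
    (B δ : ℝ) (φ : κ → V → ℝ) (c : κ → V) : Prop where
  nonneg : ∀ i y, 0 ≤ φ i y
  scaledBoundAt : ∀ i y, ScaledBoundAt m δ B (φ i) y
  exists_finset : ∀ y, ∃ s : Finset κ, s.card ≤ K ∧ (∀ i ∈ s, ‖y - c i‖ ≤ δ / 4) ∧
    ∀ᶠ z in 𝓝 y, ∀ i ∉ s, φ i z = 0
  finsum_eq_one : ∀ y, ∑ᶠ i, φ i y = 1

section Hat

/-- A smooth bump function on `ℝ` supported in `[-1, 1]` whose integer translates sum to `1`. -/
def hat (t : ℝ) : ℝ := Real.smoothTransition (t + 1) - Real.smoothTransition t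

/-- The integers `k` for which `hat (· - k)` may be nonzero near `t`. -/
def hatWindow (t : ℝ) : Finset ℤ := Finset.Icc (⌊t⌋ - 1) (⌊t⌋ + 2)

lemma hat_nonneg (t : ℝ) : 0 ≤ hat t :=
  sub_nonneg.2 (Real.smoothTransition.monotone (by linarith))

lemma hat_eq_zero {t : ℝ} (ht : 1 ≤ |t|) : hat t = 0 := by
  rw [hat]
  obtain h | h := le_abs.1 ht
  · rw [Real.smoothTransition.one_of_one_le (by linarith),
      Real.smoothTransition.one_of_one_le h, sub_self]
  · rw [Real.smoothTransition.zero_of_nonpos (by linarith),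
      Real.smoothTransition.zero_of_nonpos (by linarith), sub_self]

lemma contDiff_hat {m : ℕ∞} : ContDiff ℝ m hat :=
  (Real.smoothTransition.contDiff.comp (contDiff_id.add contDiff_const)).sub
    Real.smoothTransition.contDiff

lemma card_hatWindow (t : ℝ) : (hatWindow t).card = 4 := by
  simp [hatWindow]
  omega

lemma abs_sub_le_of_mem_hatWindow {t : ℝ} {k : ℤ} (hk : k ∈ hatWindow t) : |t - k| ≤ 2 := by
  obtain ⟨h₁, h₂⟩ := Finset.mem_Icc.1 hk
  have h₁' : (⌊t⌋ : ℝ) - 1 ≤ k := mod_cast h₁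
  have h₂' : (k : ℝ) ≤ ⌊t⌋ + 2 := mod_cast h₂
  rw [abs_le]
  constructor <;> linarith [Int.floor_le t, Int.lt_floor_add_one t]

lemma hat_sub_eq_zero {s t : ℝ} (hs : |s - t| < 1) {k : ℤ} (hk : k ∉ hatWindow t) :
    hat (s - k) = 0 := by
  rw [abs_lt] at hs
  refine hat_eq_zero (le_abs.2 ?_)
  obtain h | h : k ≤ ⌊t⌋ - 2 ∨ ⌊t⌋ + 3 ≤ k := by
    rw [hatWindow, Finset.mem_Icc] at hk
    omega
  · have h' : (k : ℝ) ≤ ⌊t⌋ - 2 := mod_cast h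
    left
    linarith [Int.floor_le t]
  · have h' : (⌊t⌋ : ℝ) + 3 ≤ k := mod_cast h
    right
    linarith [Int.lt_floor_add_one t]

lemma sum_hatWindow (t : ℝ) : ∑ k ∈ hatWindow t, hat (t - k) = 1 := by
  have hwin : hatWindow t = {⌊t⌋ - 1, ⌊t⌋, ⌊t⌋ + 1, ⌊t⌋ + 2} := by
    ext k
    simp only [hatWindow, Finset.mem_Icc, Finset.mem_insert, Finset.mem_singleton]
    omega
  have h₀ := Int.floor_le t
  have h₁ := Int.lt_floor_add_one t
  have hone : Real.smoothTransition (t - (⌊t⌋ - 1) + 1) = 1 :=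
    Real.smoothTransition.one_of_one_le (by linarith)
  have hzero : Real.smoothTransition (t - (⌊t⌋ + 2)) = 0 :=
    Real.smoothTransition.zero_of_nonpos (by linarith)
  rw [hwin, Finset.sum_insert (by simp; omega), Finset.sum_insert (by simp),
    Finset.sum_insert (by simp), Finset.sum_singleton]
  simp only [hat]
  push_cast
  rw [hone, hzero, show t - (⌊t⌋ - 1 : ℝ) = t - ⌊t⌋ + 1 by ring,
    show t - (⌊t⌋ + 1 : ℝ) + 1 = t - ⌊t⌋ by ring,
    show t - (⌊t⌋ + 2 : ℝ) + 1 = t - (⌊t⌋ + 1) by ring]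
  ring

end Hat

section LatticePartition

variable {ι : Type*} [Fintype ι]

lemma norm_le_card_mul {u : EuclideanSpace ℝ ι} {a : ℝ} (h : ∀ i, |u i| ≤ a) :
    ‖u‖ ≤ Fintype.card ι * a := by
  classical
  calc ‖u‖ = ‖∑ i, u i • EuclideanSpace.single i (1 : ℝ)‖ := by
        congr 1
        ext i
        simp [Pi.single_apply]
    _ ≤ ∑ _i : ι, a := norm_sum_le_of_le _ fun i _ => by simpa [norm_smul] using h i
    _ = Fintype.card ι * a := by simp

/-- The tensor product of the one-dimensional bump functions `hat`. -/
def tensorHat (u : EuclideanSpace ℝ ι) : ℝ := ∏ i, hat (u i)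

/-- The lattice point of `ℝ^ι` with coordinates `k`. -/
def latticePoint (k : ι → ℤ) : EuclideanSpace ℝ ι := WithLp.toLp 2 fun i => (k i : ℝ)

/-- The lattice points `k` for which `tensorHat (· - latticePoint k)` may be nonzero near `u`. -/
def latticeWindow [DecidableEq ι] (u : EuclideanSpace ℝ ι) : Finset (ι → ℤ) :=
  Fintype.piFinset fun i => hatWindow (u i)

lemma tensorHat_nonneg (u : EuclideanSpace ℝ ι) : 0 ≤ tensorHat u :=
  Finset.prod_nonneg fun _ _ => hat_nonneg _

lemma contDiff_tensorHat {m : ℕ} : ContDiff ℝ m (tensorHat (ι := ι)) :=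
  contDiff_prod fun i _ =>
    contDiff_hat.comp (EuclideanSpace.proj i : EuclideanSpace ℝ ι →L[ℝ] ℝ).contDiff

lemma hasCompactSupport_tensorHat : HasCompactSupport (tensorHat (ι := ι)) := by
  refine HasCompactSupport.intro
    (isCompact_closedBall (0 : EuclideanSpace ℝ ι) (Fintype.card ι * 1)) fun u hu => ?_
  rw [mem_closedBall_zero_iff] at hu
  obtain ⟨i, hi⟩ : ∃ i, 1 < |u i| := by
    by_contra! h
    exact hu (norm_le_card_mul h)
  exact Finset.prod_eq_zero (Finset.mem_univ i) (hat_eq_zero hi.le)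

lemma card_latticeWindow [DecidableEq ι] (u : EuclideanSpace ℝ ι) :
    (latticeWindow u).card = 4 ^ Fintype.card ι := by
  simp [latticeWindow, card_hatWindow]

lemma norm_sub_latticePoint_le [DecidableEq ι] {u : EuclideanSpace ℝ ι} {k : ι → ℤ}
    (hk : k ∈ latticeWindow u) :
    ‖u - latticePoint k‖ ≤ Fintype.card ι * 2 :=
  norm_le_card_mul fun i => abs_sub_le_of_mem_hatWindow (Fintype.mem_piFinset.1 hk i)

lemma eventually_tensorHat_sub_eq_zero [DecidableEq ι] (u : EuclideanSpace ℝ ι) :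
    ∀ᶠ v in 𝓝 u, ∀ k ∉ latticeWindow u, tensorHat (v - latticePoint k) = 0 := by
  filter_upwards [Metric.ball_mem_nhds u one_pos] with v hv k hk
  obtain ⟨i, hi⟩ : ∃ i, k i ∉ hatWindow (u i) := by
    simpa [latticeWindow, Fintype.mem_piFinset] using hk
  rw [mem_ball_iff_norm] at hv
  exact Finset.prod_eq_zero (Finset.mem_univ i)
    (hat_sub_eq_zero ((PiLp.norm_apply_le (v - u) i).trans_lt hv) hi)

lemma finsum_tensorHat (u : EuclideanSpace ℝ ι) :
    ∑ᶠ k, tensorHat (u - latticePoint k) = 1 := by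
  classical
  have hsupp : (Function.support fun k => tensorHat (u - latticePoint k)) ⊆ latticeWindow u :=
    fun k hk => by
      by_contra hk'
      exact hk ((eventually_tensorHat_sub_eq_zero u).self_of_nhds k hk')
  calc ∑ᶠ k, tensorHat (u - latticePoint k)
      = ∑ k ∈ latticeWindow u, ∏ i, hat (u i - k i) := finsum_eq_sum_of_support_subset _ hsupp
    _ = ∏ i, ∑ k ∈ hatWindow (u i), hat (u i - k) :=
        (Finset.prod_univ_sum (fun i => hatWindow (u i)) fun i k => hat (u i - k)).symm
    _ = 1 := by simp only [sum_hatWindow, Finset.prod_const_one]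

lemma exists_isUniformPartition (ι : Type*) [Fintype ι] (m : ℕ) :
    ∃ (K : ℕ) (B : ℝ), ∀ δ : ℝ, 0 < δ →
      ∃ (φ : (ι → ℤ) → EuclideanSpace ℝ ι → ℝ) (c : (ι → ℤ) → EuclideanSpace ℝ ι),
        IsUniformPartition m K B δ φ c := by
  classical
  set g : ℝ := 8 * (Fintype.card ι + 1)
  have hg : 0 < g := by positivity
  obtain ⟨B, hB⟩ := ScaledBoundAt.exists_of_hasCompactSupport (contDiff_tensorHat (ι := ι) (m := m))
    hasCompactSupport_tensorHat hg.le
  refine ⟨4 ^ Fintype.card ι, B, fun δ hδ => ?_⟩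
  have hscale : |g / δ| * δ = g := by rw [abs_of_pos (by positivity), div_mul_cancel₀ _ hδ.ne']
  refine ⟨fun k y => tensorHat ((g / δ) • y - latticePoint k),
    fun k => (g / δ)⁻¹ • latticePoint k, fun k y => tensorHat_nonneg _,
    fun k y => ScaledBoundAt.comp_smul_sub contDiff_tensorHat (by rw [hscale]; exact hB _),
    fun y => ⟨latticeWindow ((g / δ) • y), (card_latticeWindow _).le, fun k hk => ?_,
      ?_⟩, fun y => finsum_tensorHat _⟩
  · calc ‖y - (g / δ)⁻¹ • latticePoint k‖ = (g / δ)⁻¹ * ‖(g / δ) • y - latticePoint k‖ := by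
          rw [← norm_smul_of_nonneg (by positivity), smul_sub, inv_smul_smul₀ (by positivity)]
      _ ≤ (g / δ)⁻¹ * (Fintype.card ι * 2) := by
          gcongr
          exact norm_sub_latticePoint_le hk
      _ = δ * ((Fintype.card ι * 2) / g) := by
          field_simp
      _ ≤ δ * (1 / 4) := by
          refine mul_le_mul_of_nonneg_left ?_ hδ.le
          rw [div_le_div_iff₀ hg (by norm_num)]
          linarith
      _ = δ / 4 := by ring
  · exact (continuous_const_smul (g / δ)).continuousAt.eventually
      (eventually_tensorHat_sub_eq_zero ((g / δ) • y))

end LatticePartition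

section Patch

/-- The function that blends the functions `h i` with the weights `φ i`. -/
def patch {V κ : Type*} (φ h : κ → V → ℝ) (y : V) : ℝ := ∑ᶠ i, φ i y * h i y

namespace IsUniformPartition

variable {V κ : Type*} [NormedAddCommGroup V] [NormedSpace ℝ V] {m K : ℕ} {A B δ a : ℝ}
  {φ h : κ → V → ℝ} {c : κ → V} {g : V → ℝ} {y : V}

lemma exists_finset_patch_eq_sum (hφ : IsUniformPartition m K B δ φ c) (h : κ → V → ℝ) (y : V) :
    ∃ s : Finset κ, s.card ≤ K ∧ (∀ i ∈ s, ‖y - c i‖ ≤ δ / 4) ∧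
      ∀ᶠ z in 𝓝 y, ∑ i ∈ s, φ i z = 1 ∧ patch φ h z = ∑ i ∈ s, φ i z * h i z := by
  obtain ⟨s, hcard, hnear, hs⟩ := hφ.exists_finset y
  refine ⟨s, hcard, hnear, hs.mono fun z hz => ⟨?_, ?_⟩⟩
  · rw [← hφ.finsum_eq_one z]
    exact (finsum_eq_sum_of_support_subset _ fun i hi => by_contra fun his => hi (hz i his)).symm
  · exact finsum_eq_sum_of_support_subset _ fun i hi =>
      by_contra fun his => hi (mul_eq_zero_of_left (hz i his) _)

lemma patch_le (hφ : IsUniformPartition m K B δ φ c)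
    (hh : ∀ i, ‖y - c i‖ ≤ δ / 4 → h i y ≤ a) : patch φ h y ≤ a := by
  obtain ⟨s, -, hnear, hs⟩ := hφ.exists_finset_patch_eq_sum h y
  obtain ⟨hone, hpatch⟩ := hs.self_of_nhds
  calc patch φ h y = ∑ i ∈ s, φ i y * h i y := hpatch
    _ ≤ ∑ i ∈ s, φ i y * a := Finset.sum_le_sum fun i hi =>
        mul_le_mul_of_nonneg_left (hh i (hnear i hi)) (hφ.nonneg i y)
    _ = a := by rw [← Finset.sum_mul, hone, one_mul]

lemma le_patch (hφ : IsUniformPartition m K B δ φ c)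
    (hh : ∀ i, ‖y - c i‖ ≤ δ / 4 → a ≤ h i y) : a ≤ patch φ h y := by
  obtain ⟨s, -, hnear, hs⟩ := hφ.exists_finset_patch_eq_sum h y
  obtain ⟨hone, hpatch⟩ := hs.self_of_nhds
  calc a = ∑ i ∈ s, φ i y * a := by rw [← Finset.sum_mul, hone, one_mul]
    _ ≤ ∑ i ∈ s, φ i y * h i y := Finset.sum_le_sum fun i hi =>
        mul_le_mul_of_nonneg_left (hh i (hnear i hi)) (hφ.nonneg i y)
    _ = patch φ h y := hpatch.symm

lemma patch_eq (hφ : IsUniformPartition m K B δ φ c)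
    (hh : ∀ i, ‖y - c i‖ ≤ δ / 4 → h i y = a) : patch φ h y = a :=
  le_antisymm (hφ.patch_le fun i hi => (hh i hi).le) (hφ.le_patch fun i hi => (hh i hi).ge)

lemma scaledBoundAt_patch_sub (hφ : IsUniformPartition m K B δ φ c) (hδ : 0 ≤ δ)
    (hh : ∀ i, ‖y - c i‖ ≤ δ / 4 → ScaledBoundAt m δ A (h i - g) y) :
    ScaledBoundAt m δ (K * (2 ^ m * B * A)) (patch φ h - g) y := by
  obtain ⟨s, hcard, hnear, hs⟩ := hφ.exists_finset_patch_eq_sum h y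
  have heq : patch φ h - g =ᶠ[𝓝 y] ∑ i ∈ s, φ i * (h i - g) := hs.mono fun z hz => by
    simp only [Pi.sub_apply, Finset.sum_apply, Pi.mul_apply, mul_sub, Finset.sum_sub_distrib]
    rw [← Finset.sum_mul, hz.1, hz.2, one_mul]
  have hterm (i : κ) (hi : i ∈ s) :
      ScaledBoundAt m δ (2 ^ m * B * A) (φ i * (h i - g)) y :=
    (hφ.scaledBoundAt i y).mul hδ (hh i (hnear i hi))
  obtain ⟨i, hi⟩ : s.Nonempty := by
    rw [Finset.nonempty_iff_ne_empty]
    rintro rfl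
    simpa using hs.self_of_nhds.1
  have h₀ := (hterm i hi).nonneg
  exact ((ScaledBoundAt.sum hδ hterm).congr heq).mono (by gcongr)

end IsUniformPartition

end Patch

/-! ### Approximation of a Whitney family at one scale -/

section OneScale

/-- A family of nonnegative functions `f x`, for `x ∈ E`, whose `C^m` norms are bounded by `A` and
which agree near `x` and `x'` as well as Taylor's theorem permits: `f x - f x'` is `O(r ^ m)` at
scale `r` whenever `r` is at least `‖x - x'‖`. -/
structure IsWhitneyFamily {V : Type*} [NormedAddCommGroup V] [NormedSpace ℝ V] (m : ℕ) (A : ℝ)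
    (E : Set V) (f : V → V → ℝ) : Prop where
  nonneg : ∀ x ∈ E, ∀ y, 0 ≤ f x y
  scaledBoundAt : ∀ x ∈ E, ∀ y, ScaledBoundAt m 1 A (f x) y
  scaledBoundAt_sub : ∀ x ∈ E, ∀ x' ∈ E, ∀ r y, 0 < r → ‖x - x'‖ ≤ r → ‖y - x‖ ≤ r →
    ScaledBoundAt m r (A * r ^ m) (f x - f x') y

/-- A cutoff function `η` that is `1` within distance `δ` of `E` and `0` beyond distance `2δ`, with
jets bounded by `C` in units of `δ`. -/
structure IsCutoff {V : Type*} [NormedAddCommGroup V] [NormedSpace ℝ V] (m : ℕ) (C : ℝ)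
    (E : Set V) (δ : ℝ) (η : V → ℝ) : Prop where
  nonneg : ∀ y, 0 ≤ η y
  le_one : ∀ y, η y ≤ 1
  eq_one : ∀ y, Metric.infDist y E ≤ δ → η y = 1
  eq_zero : ∀ y, 2 * δ ≤ Metric.infDist y E → η y = 0
  scaledBoundAt : ∀ y, ScaledBoundAt m δ C η y

/-- A nonnegative function `G` that approximates, at scale `δ`, each member `f x` of a family near
its base point `x`, and coincides with it at the points to which `x` is much closer than the rest
of `E`. -/
structure IsScaleApprox {V : Type*} [NormedAddCommGroup V] [NormedSpace ℝ V] (m : ℕ) (C : ℝ)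
    (E : Set V) (f : V → V → ℝ) (δ : ℝ) (G : V → ℝ) : Prop where
  nonneg : ∀ y, 0 ≤ G y
  scaledBoundAt_sub : ∀ x ∈ E, ∀ y, ‖y - x‖ ≤ 2 * δ → ScaledBoundAt m δ (C * δ ^ m) (G - f x) y
  eq_of_isolated : ∀ x ∈ E, ∀ y, (∀ x' ∈ E, x' ≠ x → δ / 2 + 2 * ‖y - x‖ < ‖x' - x‖) →
    G y = f x y

variable {V κ : Type*} [NormedAddCommGroup V] [NormedSpace ℝ V] {m K : ℕ} {A B δ : ℝ}
  {E : Set V} {φ : κ → V → ℝ} {c : κ → V} {f : V → V → ℝ}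

lemma IsUniformPartition.exists_isCutoff (hφ : IsUniformPartition m K B δ φ c) (hδ : 0 < δ)
    (E : Set V) : ∃ η, IsCutoff m (K * (2 ^ m * B * 1)) E δ η := by
  classical
  let w (i : κ) (_ : V) : ℝ := if Metric.infDist (c i) E ≤ 3 / 2 * δ then 1 else 0
  have hw₀ (i : κ) (y : V) : 0 ≤ w i y := ite_nonneg zero_le_one le_rfl
  have hw₁ (i : κ) (y : V) : w i y ≤ 1 := ite_le_one le_rfl zero_le_one
  refine ⟨patch φ w, fun y => hφ.le_patch fun i _ => hw₀ i y,
    fun y => hφ.patch_le fun i _ => hw₁ i y,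
    fun y hy => hφ.patch_eq fun i hi => if_pos ?_,
    fun y hy => hφ.patch_eq fun i hi => if_neg (not_le.2 ?_), fun y => ?_⟩
  · have := Metric.infDist_le_infDist_add_dist (s := E) (x := c i) (y := y)
    rw [dist_comm, dist_eq_norm] at this
    linarith
  · have := Metric.infDist_le_infDist_add_dist (s := E) (x := y) (y := c i)
    rw [dist_eq_norm] at this
    linarith
  · have := hφ.scaledBoundAt_patch_sub (h := w) (g := 0) (A := 1) (y := y) hδ.le fun i _ => by
      rw [sub_zero]
      exact ScaledBoundAt.const (by rw [Real.norm_of_nonneg (hw₀ i y)]; exact hw₁ i y)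
    rwa [sub_zero] at this

lemma IsUniformPartition.exists_isScaleApprox [ProperSpace V]
    (hφ : IsUniformPartition m K B δ φ c) (hδ : 0 < δ) (hE : IsClosed E) (hne : E.Nonempty)
    (hf : IsWhitneyFamily m A E f) :
    ∃ G, IsScaleApprox m (K * (2 ^ m * B * (A * 5 ^ m))) E f δ G := by
  choose p hpE hp using hE.exists_infDist_eq_dist hne
  have hp_le (z x : V) (hx : x ∈ E) : ‖z - p z‖ ≤ ‖z - x‖ := by
    rw [← dist_eq_norm, ← dist_eq_norm, ← hp z]
    exact Metric.infDist_le_dist_of_mem hx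
  refine ⟨patch φ fun i => f (p (c i)),
    fun y => hφ.le_patch fun i _ => hf.nonneg _ (hpE _) y, fun x hx y hy => ?_,
    fun x hx y hy => hφ.patch_eq fun i hi => ?_⟩
  · have hterm (i : κ) (hi : ‖y - c i‖ ≤ δ / 4) :
        ScaledBoundAt m δ (A * 5 ^ m * δ ^ m) (f (p (c i)) - f x) y := by
      have hcx := norm_sub_le_norm_sub_add_norm_sub (c i) y x
      have hpx := norm_sub_le_norm_sub_add_norm_sub (p (c i)) (c i) x
      have hyp := norm_sub_le_norm_sub_add_norm_sub y (c i) (p (c i))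
      have hcp := hp_le (c i) x hx
      rw [norm_sub_rev (c i) y] at hcx
      rw [norm_sub_rev (p (c i)) (c i)] at hpx
      rw [mul_assoc, ← mul_pow]
      exact (hf.scaledBoundAt_sub _ (hpE _) x hx (5 * δ) y (by positivity) (by linarith)
        (by linarith)).of_scale_le hδ.le (by linarith)
    convert hφ.scaledBoundAt_patch_sub hδ.le hterm using 1
    ring
  · suffices p (c i) = x by rw [this]
    by_contra hne
    have hcx := norm_sub_le_norm_sub_add_norm_sub (c i) y x
    have hpx := norm_sub_le_norm_sub_add_norm_sub (p (c i)) (c i) x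
    rw [norm_sub_rev (c i) y] at hcx
    rw [norm_sub_rev (p (c i)) (c i)] at hpx
    linarith [hy _ (hpE (c i)) hne, hp_le (c i) x hx]

end OneScale

/-! ### Gluing the scales -/

section Glue

/-- The partial sums of `η 0 * G 0 + ∑ k, η (k + 1) * (G (k + 1) - G k)`, which replace the
approximation `G k` by the finer `G (k + 1)` where the cutoff `η (k + 1)` is `1`. -/
def glue {V : Type*} (η G : ℕ → V → ℝ) : ℕ → V → ℝ
  | 0 => η 0 * G 0
  | k + 1 => glue η G k + η (k + 1) * (G (k + 1) - G k)

variable {V : Type*} [NormedAddCommGroup V] [NormedSpace ℝ V] {m : ℕ} {A C D : ℝ} {E : Set V}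
  {f : V → V → ℝ} {η G : ℕ → V → ℝ}

lemma glue_eq_of_infDist_le (hη : ∀ k, IsCutoff m C E ((1 / 4) ^ k) (η k)) {k : ℕ} {y : V}
    (hy : Metric.infDist y E ≤ (1 / 4) ^ k) : glue η G k y = G k y := by
  induction k with
  | zero => simp [glue, (hη 0).eq_one y hy]
  | succ k ih =>
    have hprev := ih (hy.trans (pow_le_pow_of_le_one (by norm_num) (by norm_num) k.le_succ))
    simp [glue, (hη (k + 1)).eq_one y hy, hprev]

lemma glue_succ_eq (hη : ∀ k, IsCutoff m C E ((1 / 4) ^ k) (η k)) {k : ℕ} {y : V}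
    (hy : 2 * (1 / 4) ^ (k + 1) ≤ Metric.infDist y E) : glue η G (k + 1) y = glue η G k y := by
  simp [glue, (hη (k + 1)).eq_zero y hy]

lemma glue_nonneg (hη : ∀ k, IsCutoff m C E ((1 / 4) ^ k) (η k)) (hG : ∀ k y, 0 ≤ G k y)
    (k : ℕ) (y : V) : 0 ≤ glue η G k y := by
  induction k with
  | zero => exact mul_nonneg ((hη 0).nonneg y) (hG 0 y)
  | succ k ih =>
    obtain hfar | hnear := le_or_gt (2 * (1 / 4) ^ (k + 1)) (Metric.infDist y E)
    · rwa [glue_succ_eq hη hfar]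
    · have hprev : glue η G k y = G k y := glue_eq_of_infDist_le hη <| hnear.le.trans <| by
        rw [pow_succ]
        linarith [pow_pos (show (0 : ℝ) < 1 / 4 by norm_num) k]
      have hconvex : glue η G (k + 1) y
          = (1 - η (k + 1) y) * G k y + η (k + 1) y * G (k + 1) y := by
        simp only [glue, Pi.add_apply, Pi.mul_apply, Pi.sub_apply, hprev]
        ring
      rw [hconvex]
      exact add_nonneg (mul_nonneg (sub_nonneg.2 ((hη (k + 1)).le_one y)) (hG k y))
        (mul_nonneg ((hη (k + 1)).nonneg y) (hG (k + 1) y))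

lemma eventuallyEq_glue (hη : ∀ k, IsCutoff m C E ((1 / 4) ^ k) (η k)) {k : ℕ} {y : V}
    (hy : Metric.infDist y E < (1 / 4) ^ k) : glue η G k =ᶠ[𝓝 y] G k :=
  ((Metric.continuous_infDist_pt E).continuousAt.eventually_lt_const hy).mono fun _ hz =>
    glue_eq_of_infDist_le hη hz.le

lemma scaledBoundAt_add_cutoff_mul {g g₀ g₁ u : V → ℝ} {δ : ℝ} {y : V} (hδ : 0 < δ) (hδ₁ : δ ≤ 1)
    (hg : ScaledBoundAt m 1 A g y) (hu : ScaledBoundAt m δ C u y)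
    (h₀ : ScaledBoundAt m δ (4 ^ m * D * δ ^ m) (g₀ - g) y)
    (h₁ : ScaledBoundAt m δ (D * δ ^ m) (g₁ - g) y) :
    ScaledBoundAt m 1 (A + (4 ^ m * D + 2 ^ m * C * ((1 + 4 ^ m) * D))) (g₀ + u * (g₁ - g₀)) y := by
  have hcorr := h₀.add hδ.le (hu.mul hδ.le (h₁.sub hδ.le h₀))
  have hsum := hg.add zero_le_one (ScaledBoundAt.one_of_mul_pow
    (A := 4 ^ m * D + 2 ^ m * C * ((1 + 4 ^ m) * D)) (hcorr.mono (le_of_eq (by ring))) hδ hδ₁)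
  convert hsum using 1
  ring

lemma scaledBoundAt_glue_zero [ProperSpace V] (hE : IsClosed E) (hne : E.Nonempty)
    (hf : IsWhitneyFamily m A E f) (hη : IsCutoff m C E 1 (η 0))
    (hG : IsScaleApprox m D E f 1 (G 0)) (y : V) :
    ScaledBoundAt m 1 (2 ^ m * C * (A + D)) (glue η G 0) y := by
  obtain ⟨x, hx, hxy⟩ := hE.exists_infDist_eq_dist hne y
  obtain hfar | hnear := lt_or_ge 2 (Metric.infDist y E)
  · have hzero : glue η G 0 =ᶠ[𝓝 y] fun _ => 0 :=
      ((Metric.continuous_infDist_pt E).continuousAt.eventually_const_lt hfar).mono fun z hz => by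
        simp [glue, hη.eq_zero z (by linarith)]
    have hC := (hη.scaledBoundAt y).nonneg
    have hA := (hf.scaledBoundAt x hx x).nonneg
    have hD := (hG.scaledBoundAt_sub x hx x (by simp)).nonneg
    rw [one_pow, mul_one] at hD
    exact (ScaledBoundAt.const (by rw [norm_zero]; positivity)).congr hzero
  · have hdiff := hG.scaledBoundAt_sub x hx y (by rw [← dist_eq_norm]; linarith)
    rw [one_pow, mul_one] at hdiff
    have hG₀ := (hf.scaledBoundAt x hx y).add zero_le_one hdiff
    rw [add_sub_cancel] at hG₀
    exact (hη.scaledBoundAt y).mul zero_le_one hG₀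

lemma scaledBoundAt_glue_succ {k : ℕ} {x y : V} (hf : IsWhitneyFamily m A E f)
    (hη : ∀ k, IsCutoff m C E ((1 / 4) ^ k) (η k))
    (hG : ∀ k, IsScaleApprox m D E f ((1 / 4) ^ k) (G k)) (hx : x ∈ E)
    (hxy : ‖y - x‖ ≤ 2 * (1 / 4) ^ (k + 1)) :
    ScaledBoundAt m 1 (A + (4 ^ m * D + 2 ^ m * C * ((1 + 4 ^ m) * D))) (glue η G (k + 1)) y := by
  have hpos : (0 : ℝ) < (1 / 4) ^ (k + 1) := by positivity
  have hscale : (1 / 4 : ℝ) ^ k = 4 * (1 / 4) ^ (k + 1) := by ring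
  have hcoarse := ((hG k).scaledBoundAt_sub x hx y (by linarith)).of_scale_le hpos.le (by linarith)
  have hprev : glue η G k =ᶠ[𝓝 y] G k := eventuallyEq_glue hη <|
    (Metric.infDist_le_dist_of_mem hx).trans_lt (by rw [dist_eq_norm]; linarith)
  refine (scaledBoundAt_add_cutoff_mul hpos (pow_le_one₀ (by norm_num) (by norm_num))
    (hf.scaledBoundAt x hx y) ((hη (k + 1)).scaledBoundAt y)
    (hcoarse.mono (le_of_eq ?_)) ((hG (k + 1)).scaledBoundAt_sub x hx y hxy)).congr
    (hprev.add .rfl)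
  rw [hscale, mul_pow]
  ring

/-- A bound for the `C^m` norms of the functions `glue η G k`, in terms of the bound `A` for the
family, `C` for the cutoffs and `D` for the approximations. -/
def glueBound (m : ℕ) (A C D : ℝ) : ℝ :=
  A + 4 ^ m * D + 2 ^ m * C * (A + (1 + 4 ^ m) * D)

lemma scaledBoundAt_glue [ProperSpace V] (hE : IsClosed E) (hne : E.Nonempty)
    (hf : IsWhitneyFamily m A E f) (hη : ∀ k, IsCutoff m C E ((1 / 4) ^ k) (η k))
    (hG : ∀ k, IsScaleApprox m D E f ((1 / 4) ^ k) (G k)) (k : ℕ) (y : V) :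
    ScaledBoundAt m 1 (glueBound m A C D) (glue η G k) y := by
  obtain ⟨x, hx, hxy⟩ := hE.exists_infDist_eq_dist hne y
  have hC := ((hη 0).scaledBoundAt y).nonneg
  have hA := (hf.scaledBoundAt x hx x).nonneg
  have hD : 0 ≤ D := by simpa using ((hG 0).scaledBoundAt_sub x hx x (by simp)).nonneg
  induction k with
  | zero =>
    refine (scaledBoundAt_glue_zero hE hne hf (by simpa using hη 0) (by simpa using hG 0) y).mono ?_
    have : 0 ≤ A + 4 ^ m * D + 2 ^ m * C * (4 ^ m * D) := by positivity
    rw [glueBound]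
    linarith
  | succ k ih =>
    obtain hfar | hnear := lt_or_ge (2 * (1 / 4) ^ (k + 1)) (Metric.infDist y E)
    · exact ih.congr <|
        ((Metric.continuous_infDist_pt E).continuousAt.eventually_const_lt hfar).mono fun z hz =>
          glue_succ_eq hη hz.le
    · refine (scaledBoundAt_glue_succ hf hη hG hx (by rwa [← dist_eq_norm, ← hxy])).mono ?_
      have : 0 ≤ 2 ^ m * C * A := by positivity
      rw [glueBound]
      linarith

lemma eventually_approx_eq (hE : IsDiscrete E)
    (hG : ∀ k, IsScaleApprox m D E f ((1 / 4) ^ k) (G k)) {x : V} (hx : x ∈ E) :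
    ∀ᶠ p : ℕ × V in atTop ×ˢ 𝓝 x, G p.1 p.2 = f x p.2 := by
  obtain ⟨ρ, hρ, hball⟩ := Metric.exists_ball_inter_eq_singleton_of_mem_discrete hE hx
  have hsep (x' : V) (hx' : x' ∈ E) (hne : x' ≠ x) : ρ ≤ ‖x' - x‖ := by
    by_contra! hlt
    exact hne (hball.subset ⟨by rwa [Metric.mem_ball, dist_eq_norm], hx'⟩)
  have hscale : Tendsto (fun k : ℕ => (1 / 4 : ℝ) ^ k / 2) atTop (𝓝 0) := by
    simpa using (tendsto_pow_atTop_nhds_zero_of_lt_one (r := (1 / 4 : ℝ)) (by norm_num)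
      (by norm_num)).div_const 2
  have hdist : Tendsto (fun y => 2 * ‖y - x‖) (𝓝 x) (𝓝 0) := by
    have : Continuous fun y => 2 * ‖y - x‖ := by fun_prop
    simpa using this.tendsto x
  have hsum := (hscale.comp tendsto_fst).add (hdist.comp (tendsto_snd (f := atTop (α := ℕ))))
  rw [add_zero] at hsum
  filter_upwards [hsum.eventually_lt_const hρ] with p hp
  exact (hG p.1).eq_of_isolated x hx p.2 fun x' hx' hne => hp.trans_le (hsep x' hx' hne)

lemma eventually_glue_succ_eq (hE : IsClosed E) (hne : E.Nonempty) (hdisc : IsDiscrete E)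
    (hη : ∀ k, IsCutoff m C E ((1 / 4) ^ k) (η k))
    (hG : ∀ k, IsScaleApprox m D E f ((1 / 4) ^ k) (G k)) (y : V) :
    ∀ᶠ p : ℕ × V in atTop ×ˢ 𝓝 y, glue η G (p.1 + 1) p.2 = glue η G p.1 p.2 := by
  by_cases hy : y ∈ E
  · have happrox := eventually_approx_eq hdisc hG hy
    filter_upwards [happrox,
      (((tendsto_add_atTop_nat 1).prodMap tendsto_id).eventually happrox)] with p hp hp'
    simp only [Prod.map_fst, Prod.map_snd, id] at hp'
    simp [glue, hp, hp']
  · have hpos : 0 < Metric.infDist y E := (hE.notMem_iff_infDist_pos hne).1 hy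
    have hscale : Tendsto (fun k : ℕ => 2 * (1 / 4 : ℝ) ^ (k + 1)) atTop (𝓝 0) := by
      simpa using ((tendsto_pow_atTop_nhds_zero_of_lt_one (r := (1 / 4 : ℝ)) (by norm_num)
        (by norm_num)).comp (tendsto_add_atTop_nat 1)).const_mul 2
    have hlt := (hscale.comp (tendsto_fst (g := 𝓝 y))).eventually_lt
      (((Metric.continuous_infDist_pt E).tendsto y).comp tendsto_snd) hpos
    filter_upwards [hlt] with p hp
    exact glue_succ_eq hη hp.le

lemma locallyFinite_glue_succ_ne (hE : IsClosed E) (hne : E.Nonempty) (hdisc : IsDiscrete E)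
    (hη : ∀ k, IsCutoff m C E ((1 / 4) ^ k) (η k))
    (hG : ∀ k, IsScaleApprox m D E f ((1 / 4) ^ k) (G k)) :
    LocallyFinite fun k => {y | glue η G (k + 1) y ≠ glue η G k y} := fun y => by
  obtain ⟨p, hp, q, hq, hpq⟩ :=
    eventually_prod_iff.1 (eventually_glue_succ_eq hE hne hdisc hη hG y)
  obtain ⟨N, hN⟩ := eventually_atTop.1 hp
  refine ⟨{z | q z}, hq, (finite_lt_nat N).subset fun k ⟨z, hz, hqz⟩ => ?_⟩
  by_contra hk
  exact hz (hpq (hN k (not_lt.1 hk)) hqz)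

lemma exists_nonneg_of_approx [ProperSpace V] (hE : IsClosed E) (hne : E.Nonempty)
    (hdisc : IsDiscrete E) (hf : IsWhitneyFamily m A E f)
    (hη : ∀ k, IsCutoff m C E ((1 / 4) ^ k) (η k))
    (hG : ∀ k, IsScaleApprox m D E f ((1 / 4) ^ k) (G k)) :
    ∃ F : V → ℝ, (∀ y, 0 ≤ F y) ∧ (∀ y, ScaledBoundAt m 1 (glueBound m A C D) F y) ∧
      ∀ x ∈ E, F =ᶠ[𝓝 x] f x := by
  obtain ⟨F, hF⟩ := (locallyFinite_glue_succ_ne hE hne hdisc hη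
    hG).exists_forall_eventually_atTop_eventuallyEq
  refine ⟨F, fun y => ?_, fun y => ?_, fun x hx => ?_⟩
  · obtain ⟨k, hk⟩ := (hF y).exists
    rw [← hk.eq_of_nhds]
    exact glue_nonneg hη (fun k => (hG k).nonneg) k y
  · obtain ⟨k, hk⟩ := (hF y).exists
    exact (scaledBoundAt_glue hE hne hf hη hG k y).congr hk.symm
  · obtain ⟨k, hk, happrox⟩ := ((hF x).and (eventually_approx_eq hdisc hG hx).curry).exists
    have hglue : glue η G k =ᶠ[𝓝 x] G k := eventuallyEq_glue hη (by
      rw [Metric.infDist_zero_of_mem hx]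
      positivity)
    exact hk.symm.trans (hglue.trans happrox)

end Glue

lemma exists_nonneg_of_isWhitneyFamily (ι : Type*) [Fintype ι] (m : ℕ) :
    ∃ C : ℝ, ∀ (E : Set (EuclideanSpace ℝ ι)), IsClosed E → E.Nonempty → IsDiscrete E →
      ∀ (f : EuclideanSpace ℝ ι → EuclideanSpace ℝ ι → ℝ) (A : ℝ), IsWhitneyFamily m A E f →
        ∃ F : EuclideanSpace ℝ ι → ℝ, (∀ y, 0 ≤ F y) ∧ (∀ y, ScaledBoundAt m 1 (C * A) F y) ∧
          ∀ x ∈ E, F =ᶠ[𝓝 x] f x := by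
  obtain ⟨K, B, hpart⟩ := exists_isUniformPartition ι m
  refine ⟨glueBound m 1 (K * (2 ^ m * B * 1)) (K * (2 ^ m * B * 5 ^ m)),
    fun E hE hne hdisc f A hf => ?_⟩
  choose φ c hφ using fun k : ℕ => hpart ((1 / 4) ^ k) (by positivity)
  choose η hη using fun k => (hφ k).exists_isCutoff (by positivity) E
  choose G hG using fun k => (hφ k).exists_isScaleApprox (by positivity) hE hne hf
  convert exists_nonneg_of_approx hE hne hdisc hf hη hG using 6
  rw [glueBound, glueBound]
  ring

/-! ### The extension theorem -/

section Extension

variable {m n : ℕ} {A M : ℝ} {E : Set (Euc n)} {P : Euc n → MPoly n} {f : Euc n → Euc n → ℝ}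
  {F : Euc n → ℝ}

lemma isWhitneyFamily_of_isJetAt (hm : 0 < m) (hM : 0 ≤ M) (hf : ∀ x ∈ E, CmNormLe m n (f x) M)
    (hf₀ : ∀ x ∈ E, ∀ y, 0 ≤ f x y) (hP : ∀ x ∈ E, IsJetAt m n (f x) x (P x))
    (hPP' : ∀ x ∈ E, ∀ x' ∈ E, ∀ β : Fin n → ℕ, deg β ≤ m - 1 →
      |mD β (peval (P x - P x')) x| ≤ M * ‖x - x'‖ ^ (m - deg β)) :
    IsWhitneyFamily m (compareConst m n * M) E f where
  nonneg := hf₀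
  scaledBoundAt x hx y := (scaledBoundAt_of_cmNormLe (hf x hx) hM y).mono <| by
    have hpow : (1 : ℝ) ≤ 2 ^ m := one_le_pow₀ one_le_two
    have hone : (1 : ℝ) ≤ 2 ^ m * (2 + 2 ^ m) :=
      one_le_mul_of_one_le_of_one_le hpow (by linarith)
    rw [compareConst, ← mul_assoc]
    gcongr
    exact le_mul_of_one_le_left (by positivity) hone
  scaledBoundAt_sub x hx x' hx' r y hr hxx' hyx :=
    scaledBoundAt_sub_of_isJetAt hm hM (hf x hx) (hf x' hx') (hP x hx) (hP x' hx')
      (hPP' x hx x' hx') hr hxx' hyx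

lemma cmNormLe_of_scaledBoundAt (h : ∀ y, ScaledBoundAt m 1 A F y) : CmNormLe m n F A := by
  have hF : ContDiff ℝ m F := contDiff_iff_contDiffAt.2 fun y => (h y).1
  refine ⟨hF, fun α hα y => ?_⟩
  have hα' := (h y).2 (deg α) hα
  rw [one_pow, one_mul] at hα'
  exact (abs_mD_le_norm_iteratedFDeriv α (hF.of_le (mod_cast hα)) y).trans hα'

lemma isJetAt_congr {g : Euc n → ℝ} {x : Euc n} {Q : MPoly n} (hF : ContDiff ℝ m F)
    (hg : ContDiff ℝ m g) (h : F =ᶠ[𝓝 x] g) (hQ : IsJetAt m n g x Q) : IsJetAt m n F x Q :=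
  ⟨hQ.1, fun α hα => by
    have hα' : (deg α : WithTop ℕ∞) ≤ m := mod_cast hα.trans m.pred_le
    rw [hQ.2 α hα, mD_congr α (hF.of_le hα') (hg.of_le hα') h]⟩

end Extension

end WhitneyNonneg

open WhitneyNonneg in
theorem whitney_extension_nonneg_Cm_general (m n : ℕ) (hm : 0 < m) :
    ∃ C : ℝ, 0 < C ∧
      ∀ E : Set (Euc n), IsClosed E → IsDiscrete E → ∀ P : Euc n → MPoly n, ∀ M : ℝ, 0 ≤ M →
        (∀ x ∈ E, P x ∈ GammaStar m n x M) →
        (∀ x ∈ E, ∀ x' ∈ E, ∀ β : Fin n → ℕ, deg β ≤ m - 1 →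
          |mD β (peval (P x - P x')) x| ≤ M * ‖x - x'‖ ^ (m - deg β)) →
        ∃ F : Euc n → ℝ, CmNormLe m n F (C * M) ∧ (∀ y, 0 ≤ F y) ∧
          ∀ x ∈ E, IsJetAt m n F x (P x) := by
  obtain ⟨C, hC⟩ := exists_nonneg_of_isWhitneyFamily (Fin n) m
  refine ⟨max (C * compareConst m n) 1, by positivity, fun E hE hdisc P M hM hΓ hPP' => ?_⟩
  obtain rfl | hne := E.eq_empty_or_nonempty
  · refine ⟨fun _ => 0, cmNormLe_of_scaledBoundAt fun _ => ScaledBoundAt.const ?_,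
      fun _ => le_rfl, by simp⟩
    rw [norm_zero]
    positivity
  choose! f hfM hf₀ hfP using hΓ
  obtain ⟨F, hF₀, hFM, hFf⟩ := hC E hE hne hdisc f (compareConst m n * M)
    (isWhitneyFamily_of_isJetAt hm hM hfM hf₀ hfP hPP')
  have hF : CmNormLe m n F (max (C * compareConst m n) 1 * M) :=
    cmNormLe_of_scaledBoundAt fun y => (hFM y).mono <| by
      rw [← mul_assoc]
      exact mul_le_mul_of_nonneg_right (le_max_left _ _) hM
  exact ⟨F, hF, hF₀, fun x hx => isJetAt_congr hF.1 (hfM x hx).1 (hFf x hx) (hfP x hx)⟩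

/-- **Lemma 2.2**: Whitney extension keeping nonnegativity, `C^m` version. -/
theorem whitney_extension_nonneg_Cm (m n : ℕ) (hm : 0 < m) (hn : 0 < n) :
    ∃ C : ℝ, 0 < C ∧
      ∀ (E : Set (Euc n)), E.Finite → ∀ P : Euc n → MPoly n, ∀ M : ℝ, 0 < M →
        (∀ x ∈ E, MvPolynomial.totalDegree (P x) ≤ m - 1) →
        (∀ x ∈ E, P x ∈ GammaStar m n x M) →
        (∀ x ∈ E, ∀ x' ∈ E, ∀ β : Fin n → ℕ, deg β ≤ m - 1 →
          |mD β (peval (P x - P x')) x| ≤ M * ‖x - x'‖ ^ (m - deg β)) →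
        ∃ F : Euc n → ℝ, CmNormLe m n F (C * M) ∧ (∀ y, 0 ≤ F y) ∧
          ∀ x ∈ E, IsJetAt m n F x (P x) := by
  obtain ⟨C, hC, hext⟩ := whitney_extension_nonneg_Cm_general m n hm
  exact ⟨C, hC, fun E hE P M hM _ hΓ hPP' => hext E hE.isClosed hE.isDiscrete P M hM.le hΓ hPP'⟩

end
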